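/- arXiv:0911.1093 — 2 statements merged into one kernel-verified Lean document; each statement's English description precedes it below -/
import Mathlib

section
/- Let p ≥ 5 be a prime, q = 2(p−1), and let x₁, …, x_m be May generators each of filtration 1 (i.e., each is some a_k or some h_{i,j}); for j ≥ −1 set c̄_j = Σ_{i=1}^{m} c_j(deg x_i). Suppose 0 ≤ i₁ < i₃ are integers such that c̄_j = 0 for every j ≥ −1 with j < i₁ or j > i₃. Then at least (c̄_{i₁} + c̄_{i₃} − m) of the generators x₁, …, x_m are equal to h_{i₃−i₁+1, i₁}. In particular, if c̄_{i₁} + c̄_{i₃} − m > 1 then the exterior generator h_{i₃−i₁+1, i₁} occurs at least twice among the x_i, so the multiset {x₁, …, x_m} is not an admissible monomial (the corresponding May monomial is zero). -/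
/-- A formal May spectral sequence generator: `a k`, `h i j`, or `b i j`. -/
inductive MayGen : Type
  | a (k : ℕ)
  | h (i j : ℕ)
  | b (i j : ℕ)
  deriving DecidableEq

namespace MayGen

/-- Validity: the generators `h i j` and `b i j` require `i ≥ 1`. -/
def IsValid : MayGen → Prop
  | a _ => True
  | h i _ => 1 ≤ i
  | b i _ => 1 ≤ i

/-- May filtration of a generator. -/
def filt : MayGen → ℕ
  | a _ => 1
  | h _ _ => 1
  | b _ _ => 2

/-- Internal degree of a generator (at the prime `p`). -/
def deg (p : ℕ) : MayGen → ℕ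
  | a k => 2 * p ^ k - 1
  | h i j => 2 * (p ^ i - 1) * p ^ j
  | b i j => 2 * (p ^ i - 1) * p ^ (j + 1)

end MayGen

/-- Total filtration of a multiset of May generators. -/
def totalFilt (S : Multiset MayGen) : ℕ := (S.map MayGen.filt).sum

/-- Total internal degree of a multiset of May generators. -/
def totalDeg (p : ℕ) (S : Multiset MayGen) : ℕ := (S.map (MayGen.deg p)).sum

/-- An admissible monomial: each exterior generator `h i j` occurs at most once. -/
def Admissible (S : Multiset MayGen) : Prop := ∀ i j : ℕ, S.count (MayGen.h i j) ≤ 1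

/-- The `j`-th digit (`j ≥ -1`) of `t` in the mixed radix `(q, p, p, …)` with
`q = 2(p-1)`:  `t = c₋₁ + q·Σ_{j≥0} c_j p^j` with `0 ≤ c₋₁ < q`, `0 ≤ c_j < p`. -/
def mayDigit (p t : ℕ) (j : ℤ) : ℕ :=
  if j = -1 then t % (2 * (p - 1))
  else if 0 ≤ j then (t / (2 * (p - 1)) / p ^ j.toNat) % p
  else 0

/-
A generator `a k` has odd degree while `q` is even, so its digit `c₋₁` is nonzero. Since
`deg (h i j) = q * (p ^ j + ⋯ + p ^ (j + i - 1))`, the digits of `h i j` are `1` in the positions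
`j, …, j + i - 1` and `0` elsewhere. If the digit sums vanish outside `[i₁, i₃]`, every member of
`S` is therefore an `h i j` whose block of ones lies in `[i₁, i₃]`. Such a block contributes at most
`1` to `c̄_{i₁} + c̄_{i₃}` unless it is all of `[i₁, i₃]`, when the generator is
`h (i₃ - i₁ + 1) i₁` and contributes `2`.
-/

section SumsOfDistinctPowers

variable {p : ℕ}

lemma sum_pow_div_pow (hp : 1 < p) (s : Finset ℕ) (l : ℕ) :
    (∑ k ∈ s, p ^ k) / p ^ l = ∑ k ∈ s with l ≤ k, p ^ (k - l) := by
  have low_lt : ∑ k ∈ s with ¬ l ≤ k, p ^ k < p ^ l :=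
    Nat.geomSum_lt hp fun k hk => not_le.mp (Finset.mem_filter.mp hk).2
  have high_eq : ∑ k ∈ s with l ≤ k, p ^ k = p ^ l * ∑ k ∈ s with l ≤ k, p ^ (k - l) := by
    rw [Finset.mul_sum]
    exact Finset.sum_congr rfl fun k hk => (pow_mul_pow_sub p (Finset.mem_filter.mp hk).2).symm
  rw [← Finset.sum_filter_add_sum_filter_not s (l ≤ ·), high_eq,
    Nat.mul_add_div (Nat.pow_pos (Nat.zero_lt_of_lt hp)), Nat.div_eq_of_lt low_lt, add_zero]

lemma sum_pow_div_pow_mod (hp : 1 < p) (s : Finset ℕ) (l : ℕ) :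
    (∑ k ∈ s, p ^ k) / p ^ l % p = if l ∈ s then 1 else 0 := by
  have pow_modEq_zero (k : ℕ) (hk : k ∈ s.filter (l ≤ ·)) (hkl : k ≠ l) :
      p ^ (k - l) ≡ 0 [MOD p] :=
    have hlt : l < k := lt_of_le_of_ne (Finset.mem_filter.mp hk).2 hkl.symm
    Nat.modEq_zero_iff_dvd.mpr (dvd_pow_self p (Nat.sub_pos_of_lt hlt).ne')
  rw [sum_pow_div_pow hp, Nat.sum_modEq_ite pow_modEq_zero]
  split_ifs <;> simp_all [Nat.mod_eq_of_lt]

lemma pow_sub_one_mul_pow (hp : 0 < p) (i j : ℕ) :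
    (p ^ i - 1) * p ^ j = (p - 1) * ∑ k ∈ Finset.Ico j (j + i), p ^ k := by
  rw [Finset.sum_Ico_eq_sum_range, Nat.add_sub_cancel_left, ← geom_sum_mul_of_one_le hp i]
  simp only [pow_add, ← Finset.mul_sum]
  ring

end SumsOfDistinctPowers

lemma sum_map_le_count_add_card {α : Type*} [DecidableEq α] {S : Multiset α} {f : α → ℕ} {y : α}
    (hf : ∀ x ∈ S, f x ≤ (if y = x then 1 else 0) + 1) :
    (S.map f).sum ≤ S.count y + S.card := by
  induction S using Multiset.induction_on with
  | empty => simp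
  | cons x S ih =>
    have hx := hf x (Multiset.mem_cons_self x S)
    have hS := ih fun z hz => hf z (Multiset.mem_cons_of_mem hz)
    simp only [Multiset.map_cons, Multiset.sum_cons, Multiset.count_cons, Multiset.card_cons]
    omega

lemma mayDigit_natCast (p t l : ℕ) : mayDigit p t l = t / (2 * (p - 1)) / p ^ l % p := by
  simp [mayDigit, show (l : ℤ) ≠ -1 by omega]

/-- The digit sum `c̄_j = Σ_x c_j(deg x)` over the members `x` of `S`, counted with multiplicity. -/
def mayDigitSum (p : ℕ) (S : Multiset MayGen) (j : ℤ) : ℕ :=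
  (S.map fun x => mayDigit p (MayGen.deg p x) j).sum

namespace MayGen

variable {p : ℕ}

lemma deg_h (hp : 0 < p) (i j : ℕ) :
    deg p (h i j) = 2 * (p - 1) * ∑ k ∈ Finset.Ico j (j + i), p ^ k := by
  rw [deg, mul_assoc, pow_sub_one_mul_pow hp, mul_assoc]

lemma mayDigit_deg_h (hp : 1 < p) (i j l : ℕ) :
    mayDigit p (deg p (h i j)) l = if l ∈ Finset.Ico j (j + i) then 1 else 0 := by
  rw [mayDigit_natCast, deg_h (Nat.zero_lt_of_lt hp), Nat.mul_div_cancel_left _ (by omega),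
    sum_pow_div_pow_mod hp]

lemma mayDigit_neg_one_deg_a_ne_zero (hp : 0 < p) (k : ℕ) :
    mayDigit p (deg p (a k)) (-1) ≠ 0 := by
  intro hzero
  have even_deg : 2 ∣ 2 * p ^ k - 1 :=
    (dvd_mul_right 2 (p - 1)).trans (Nat.dvd_of_mod_eq_zero (by simpa [mayDigit, deg] using hzero))
  have : 0 < p ^ k := Nat.pow_pos hp
  omega

lemma exists_eq_h_of_mayDigit_neg_one_eq_zero (hp : 0 < p) {x : MayGen} (hx : x.filt = 1)
    (hzero : mayDigit p (x.deg p) (-1) = 0) : ∃ i j, x = h i j := by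
  cases x with
  | a k => exact absurd hzero (mayDigit_neg_one_deg_a_ne_zero hp k)
  | h i j => exact ⟨i, j, rfl⟩
  | b i j => simp [filt] at hx

lemma h_eq_h_of_Ico_subset_Icc {i j i₁ i₃ : ℕ}
    (hsub : Finset.Ico j (j + i) ⊆ Finset.Icc i₁ i₃)
    (h₁ : i₁ ∈ Finset.Ico j (j + i)) (h₃ : i₃ ∈ Finset.Ico j (j + i)) :
    h (i₃ - i₁ + 1) i₁ = h i j := by
  simp only [Finset.mem_Ico] at h₁ h₃
  have first_mem : j ∈ Finset.Icc i₁ i₃ := hsub (Finset.mem_Ico.mpr (by omega))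
  have last_mem : j + i - 1 ∈ Finset.Icc i₁ i₃ := hsub (Finset.mem_Ico.mpr (by omega))
  simp only [Finset.mem_Icc] at first_mem last_mem
  simp only [h.injEq]
  omega

lemma Ico_subset_Icc_of_mayDigit_eq_zero (hp : 1 < p) {i j i₁ i₃ : ℕ}
    (hzero : ∀ l : ℕ, l < i₁ ∨ i₃ < l → mayDigit p (deg p (h i j)) l = 0) :
    Finset.Ico j (j + i) ⊆ Finset.Icc i₁ i₃ := by
  intro l hl
  by_contra hout
  have digit_zero := hzero l (by simp only [Finset.mem_Icc] at hout; omega)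
  simp [mayDigit_deg_h hp, hl] at digit_zero

lemma mayDigit_add_mayDigit_le (hp : 1 < p) {x : MayGen} (hx : x.filt = 1) {i₁ i₃ : ℕ}
    (hzero : ∀ j : ℤ, -1 ≤ j → (j < i₁ ∨ i₃ < j) → mayDigit p (x.deg p) j = 0) :
    mayDigit p (x.deg p) i₁ + mayDigit p (x.deg p) i₃ ≤
      (if h (i₃ - i₁ + 1) i₁ = x then 1 else 0) + 1 := by
  obtain ⟨i, j, rfl⟩ := exists_eq_h_of_mayDigit_neg_one_eq_zero (Nat.zero_lt_of_lt hp) hx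
    (hzero (-1) le_rfl (by omega))
  have hsub : Finset.Ico j (j + i) ⊆ Finset.Icc i₁ i₃ :=
    Ico_subset_Icc_of_mayDigit_eq_zero hp fun l hl => hzero l (by omega) (by omega)
  rw [mayDigit_deg_h hp, mayDigit_deg_h hp]
  by_cases hmem : i₁ ∈ Finset.Ico j (j + i) ∧ i₃ ∈ Finset.Ico j (j + i)
  · simp [h_eq_h_of_Ico_subset_Icc hsub hmem.1 hmem.2, hmem]
  · split_ifs <;> simp_all

end MayGen

theorem stmt4_general {p : ℕ} (hp : 1 < p) {S : Multiset MayGen} (hfilt : ∀ x ∈ S, x.filt = 1)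
    {i₁ i₃ : ℕ}
    (hzero : ∀ j : ℤ, -1 ≤ j → (j < i₁ ∨ i₃ < j) → mayDigitSum p S j = 0) :
    (mayDigitSum p S i₁ + mayDigitSum p S i₃ ≤
      S.count (MayGen.h (i₃ - i₁ + 1) i₁) + S.card) ∧
    (S.card + 1 < mayDigitSum p S i₁ + mayDigitSum p S i₃ → ¬ Admissible S) := by
  have digit_eq_zero (x : MayGen) (hx : x ∈ S) (j : ℤ) (hj : -1 ≤ j) (hout : j < i₁ ∨ i₃ < j) :
      mayDigit p (x.deg p) j = 0 :=
    Multiset.sum_eq_zero_iff.mp (hzero j hj hout) _ (Multiset.mem_map_of_mem _ hx)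
  have count_bound : mayDigitSum p S i₁ + mayDigitSum p S i₃ ≤
      S.count (MayGen.h (i₃ - i₁ + 1) i₁) + S.card := by
    rw [mayDigitSum, mayDigitSum, ← Multiset.sum_map_add]
    exact sum_map_le_count_add_card fun x hx =>
      MayGen.mayDigit_add_mayDigit_le hp (hfilt x hx) (digit_eq_zero x hx)
  refine ⟨count_bound, fun hlarge hadm => ?_⟩
  have count_le_one := hadm (i₃ - i₁ + 1) i₁
  omega

/-- if all generators of `S` have filtration `1` and the digit sums `c̄_j`
vanish outside `[i₁, i₃]` with `0 ≤ i₁ < i₃`, then at least `c̄_{i₁} + c̄_{i₃} - m`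
members of `S` equal `h (i₃-i₁+1) i₁`; in particular if `c̄_{i₁} + c̄_{i₃} - m > 1`
then `S` is not admissible. -/
theorem stmt4 (p : ℕ) (hp : p.Prime) (hp5 : 5 ≤ p) (S : Multiset MayGen)
    (hval : ∀ x ∈ S, x.IsValid) (hfilt : ∀ x ∈ S, x.filt = 1)
    (i₁ i₃ : ℕ) (h13 : i₁ < i₃)
    (hzero : ∀ j : ℤ, -1 ≤ j → (j < (i₁ : ℤ) ∨ (i₃ : ℤ) < j) →
      (S.map (fun x => mayDigit p (MayGen.deg p x) j)).sum = 0) :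
    ((S.map (fun x => mayDigit p (MayGen.deg p x) (i₁ : ℤ))).sum +
        (S.map (fun x => mayDigit p (MayGen.deg p x) (i₃ : ℤ))).sum ≤
      S.count (MayGen.h (i₃ - i₁ + 1) i₁) + Multiset.card S) ∧
    (Multiset.card S + 1 <
        (S.map (fun x => mayDigit p (MayGen.deg p x) (i₁ : ℤ))).sum +
          (S.map (fun x => mayDigit p (MayGen.deg p x) (i₃ : ℤ))).sum →
      ¬ Admissible S) :=
  stmt4_general hp.one_lt hfilt hzero
end

section
/- Let p ≥ 5 be a prime, q = 2(p−1), and let m, n be integers with n ≥ m+2 > 5. Then the unique admissible monomial of total filtration 3 and total degree q(2p^{n−1} + 2p^{n−2} + ⋯ + 2p^{m+1} + 3p^m + 3p^{m−1} + ⋯ + 3p + 3) + 1 is the multiset {a_n, h_{n,0}, h_{m+1,0}}. (This is the combinatorial content of the computation E₁^{3, t, *} = Z_p{a_n h_{n,0} h_{m+1,0}} used in the proof of Lemma 3.1.) -/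
/-!
Every degree is a difference of terms `2 * p ^ e`, up to `-1` for each factor `a k`. The total
degree in question is `4 * p ^ n + 2 * p ^ (m + 1) - 5`; it is odd, so some `a k` occurs, and
filtration three leaves only the shapes `a a a`, `a h h` and `a b`. Moving the negative terms across
and halving, each shape gives an equality between two sums of at most five powers of `p`, in which
no exponent is repeated `p` times. By uniqueness of base `p` expansions the two multisets of
exponents agree. Comparing them excludes `a a a` and `a b`; for `{a k, h i j, h i' j'}` it gives
first `j = j' = 0` and then `{k, i, i'} = {n, n, m + 1}`, where `i ≠ i'` because the generators
`h i j` are exterior.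
-/

theorem sum_map_pow_eq_sum_count (b : ℕ) {N : ℕ} {s : Multiset ℕ} (hs : ∀ e ∈ s, e < N) :
    (s.map (b ^ ·)).sum = ∑ i : Fin N, s.count (i : ℕ) * b ^ (i : ℕ) := by
  rw [Finset.sum_multiset_map_count, ← Finset.sum_range (fun i => s.count i * b ^ i)]
  refine Finset.sum_subset (fun e he => ?_) (fun e _ he => ?_)
  · exact Finset.mem_range.mpr (hs e (Multiset.mem_toFinset.mp he))
  · rw [Multiset.count_eq_zero_of_notMem (fun h => he (Multiset.mem_toFinset.mpr h)), zero_smul]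

theorem eq_of_sum_map_pow_eq {b : ℕ} {s t : Multiset ℕ} (hs : ∀ e, s.count e < b)
    (ht : ∀ e, t.count e < b) (h : (s.map (b ^ ·)).sum = (t.map (b ^ ·)).sum) : s = t := by
  ext e
  let N := e + 1 + s.sum + t.sum
  have hsN : ∀ x ∈ s, x < N := fun x hx => by have := Multiset.le_sum_of_mem hx; omega
  have htN : ∀ x ∈ t, x < N := fun x hx => by have := Multiset.le_sum_of_mem hx; omega
  let digits (u : Multiset ℕ) (hu : ∀ e, u.count e < b) (i : Fin N) : Fin b :=
    ⟨u.count (i : ℕ), hu i⟩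
  have hdigits : digits s hs = digits t ht := finFunctionFinEquiv.injective <| Fin.ext <| by
    simpa only [finFunctionFinEquiv_apply, digits, ← sum_map_pow_eq_sum_count b hsN,
      ← sum_map_pow_eq_sum_count b htN] using h
  exact congrArg Fin.val (congrFun hdigits ⟨e, by omega⟩)

theorem count_lt_card_of_mem_of_ne {α : Type*} [DecidableEq α] {s : Multiset α} {x y : α}
    (hx : x ∈ s) (hy : y ∈ s) (hxy : x ≠ y) (e : α) : s.count e < Multiset.card s :=
  (Multiset.count_le_card e s).lt_of_ne fun h =>
    hxy ((Multiset.count_eq_card.mp h x hx).symm.trans (Multiset.count_eq_card.mp h y hy))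

theorem two_mul_pred_mul_sum_pow_add_six {p r n : ℕ} (hp : 0 < p) (hrn : r ≤ n) :
    2 * (p - 1) * (2 * ∑ j ∈ Finset.Ico r n, p ^ j + 3 * ∑ j ∈ Finset.range r, p ^ j) + 6 =
      4 * p ^ n + 2 * p ^ r := by
  have hIco := geom_sum_Ico_mul (p : ℤ) hrn
  have hrange := geom_sum_mul (p : ℤ) r
  zify [hp]
  linear_combination 4 * hIco + 6 * hrange

namespace MayGen

variable {p : ℕ}

theorem deg_a_add_one (hp : 0 < p) (k : ℕ) : (a k).deg p + 1 = 2 * p ^ k := by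
  have : 0 < p ^ k := Nat.pow_pos hp
  simp only [deg]
  omega

theorem deg_h_add (hp : 0 < p) (i j : ℕ) : (h i j).deg p + 2 * p ^ j = 2 * p ^ (i + j) := by
  calc (h i j).deg p + 2 * p ^ j = 2 * (p ^ i - 1 + 1) * p ^ j := by simp only [deg]; ring
    _ = 2 * p ^ (i + j) := by rw [Nat.sub_add_cancel (Nat.pow_pos hp), pow_add, mul_assoc]

theorem deg_b_add (hp : 0 < p) (i j : ℕ) :
    (b i j).deg p + 2 * p ^ (j + 1) = 2 * p ^ (i + (j + 1)) :=
  deg_h_add hp i (j + 1)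

theorem odd_deg_a (hp : 0 < p) (k : ℕ) : Odd ((a k).deg p) := by
  have := deg_a_add_one hp k
  rw [Nat.odd_iff]
  omega

theorem even_deg_h (p i j : ℕ) : Even ((h i j).deg p) := by
  simp only [deg, mul_assoc, even_two_mul]

theorem even_deg_b (p i j : ℕ) : Even ((b i j).deg p) :=
  even_deg_h p i (j + 1)

theorem filt_pos (x : MayGen) : 0 < x.filt := by
  cases x <;> simp [filt]

end MayGen

section Monomial

open MayGen

@[simp]
theorem totalFilt_cons (x : MayGen) (S : Multiset MayGen) :
    totalFilt (x ::ₘ S) = x.filt + totalFilt S := by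
  simp only [totalFilt, Multiset.map_cons, Multiset.sum_cons]

@[simp]
theorem totalFilt_singleton (x : MayGen) : totalFilt {x} = x.filt := by
  simp only [totalFilt, Multiset.map_singleton, Multiset.sum_singleton]

@[simp]
theorem totalDeg_cons (p : ℕ) (x : MayGen) (S : Multiset MayGen) :
    totalDeg p (x ::ₘ S) = x.deg p + totalDeg p S := by
  simp only [totalDeg, Multiset.map_cons, Multiset.sum_cons]

@[simp]
theorem totalDeg_singleton (p : ℕ) (x : MayGen) : totalDeg p {x} = x.deg p := by
  simp only [totalDeg, Multiset.map_singleton, Multiset.sum_singleton]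

theorem card_le_totalFilt (S : Multiset MayGen) : Multiset.card S ≤ totalFilt S := by
  have hfilt : ∀ d ∈ S.map filt, 1 ≤ d := fun d hd => by
    obtain ⟨x, -, rfl⟩ := Multiset.mem_map.mp hd
    exact x.filt_pos
  simpa [totalFilt] using Multiset.card_nsmul_le_sum hfilt

theorem eq_singleton_or_eq_pair_of_totalFilt_eq_two {S : Multiset MayGen} (hS : totalFilt S = 2) :
    (∃ i j, S = {b i j}) ∨ ∃ x y, S = {x, y} ∧ x.filt = 1 ∧ y.filt = 1 := by
  have hcard := hS ▸ card_le_totalFilt S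
  interval_cases hc : Multiset.card S
  · simp [Multiset.card_eq_zero.mp hc, totalFilt] at hS
  · obtain ⟨x, rfl⟩ := Multiset.card_eq_one.mp hc
    cases x <;> simp_all [filt]
  · obtain ⟨x, y, rfl⟩ := Multiset.card_eq_two.mp hc
    have hx := x.filt_pos
    have hy := y.filt_pos
    simp only [Multiset.insert_eq_cons, totalFilt_cons, totalFilt_singleton] at hS
    exact .inr ⟨x, y, rfl, by omega, by omega⟩

theorem exists_a_mem_of_odd_totalDeg {p : ℕ} {S : Multiset MayGen} (hS : Odd (totalDeg p S)) :
    ∃ k, a k ∈ S := by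
  by_contra! hno
  refine Nat.not_even_iff_odd.mpr hS (even_iff_two_dvd.mpr (Multiset.dvd_sum fun d hd => ?_))
  obtain ⟨x, hx, rfl⟩ := Multiset.mem_map.mp hd
  cases x with
  | a k => exact absurd hx (hno k)
  | h i j => exact (even_deg_h p i j).two_dvd
  | b i j => exact (even_deg_b p i j).two_dvd

theorem eq_aaa_or_eq_ahh_or_eq_ab_of_totalFilt_eq_three {p : ℕ} (hp : 0 < p) {S : Multiset MayGen}
    (hfilt : totalFilt S = 3) (hodd : Odd (totalDeg p S)) :
    (∃ k₁ k₂ k₃, S = {a k₁, a k₂, a k₃}) ∨ (∃ k i j i' j', S = {a k, h i j, h i' j'}) ∨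
      ∃ k i j, S = {a k, b i j} := by
  obtain ⟨k, hk⟩ := exists_a_mem_of_odd_totalDeg hodd
  obtain ⟨T, rfl⟩ := Multiset.exists_cons_of_mem hk
  have hT : totalFilt T = 2 := by simp only [totalFilt_cons, filt] at hfilt; omega
  have hTeven : Even (totalDeg p T) := by
    rw [totalDeg_cons, Nat.odd_add] at hodd
    exact hodd.mp (odd_deg_a hp k)
  rcases eq_singleton_or_eq_pair_of_totalFilt_eq_two hT with ⟨i, j, rfl⟩ | ⟨x, y, rfl, hx, hy⟩
  · exact .inr (.inr ⟨k, i, j, rfl⟩)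
  simp only [Multiset.insert_eq_cons, totalDeg_cons, totalDeg_singleton, Nat.even_add] at hTeven
  cases x with
  | b i j => simp [filt] at hx
  | a k' =>
    cases y with
    | b i j => simp [filt] at hy
    | a k'' => exact .inl ⟨k, k', k'', rfl⟩
    | h i j =>
      exact absurd (hTeven.mpr (even_deg_h p i j)) (Nat.not_even_iff_odd.mpr (odd_deg_a hp k'))
  | h i j =>
    cases y with
    | b i' j' => simp [filt] at hy
    | a k' =>
      exact absurd (hTeven.mp (even_deg_h p i j)) (Nat.not_even_iff_odd.mpr (odd_deg_a hp k'))
    | h i' j' => exact .inr (.inl ⟨k, i, j, i', j', rfl⟩)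

end Monomial

section DegreeEquation

open MayGen

variable {p r n : ℕ}

theorem totalDeg_aaa_add_five_ne (hp : 5 ≤ p) (k₁ k₂ k₃ : ℕ) :
    totalDeg p {a k₁, a k₂, a k₃} + 5 ≠ 4 * p ^ n + 2 * p ^ r := by
  intro hdeg
  have h₁ := deg_a_add_one (p := p) (by omega) k₁
  have h₂ := deg_a_add_one (p := p) (by omega) k₂
  have h₃ := deg_a_add_one (p := p) (by omega) k₃
  have hexp : ({0, k₁, k₂, k₃} : Multiset ℕ) = {n, n, r} := by
    refine eq_of_sum_map_pow_eq (b := p)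
      (fun e => (Multiset.count_le_card e _).trans_lt hp)
      (fun e => (Multiset.count_le_card e _).trans_lt (Nat.lt_of_succ_lt hp)) ?_
    simp only [Multiset.insert_eq_cons, Multiset.map_cons, Multiset.map_singleton,
      Multiset.sum_cons, Multiset.sum_singleton, totalDeg_cons, totalDeg_singleton,
      pow_zero] at hdeg ⊢
    omega
  simpa using congrArg Multiset.card hexp

theorem totalDeg_ab_add_five_ne (hp : 5 ≤ p) (hr : 0 < r) (hn : 0 < n) (k i j : ℕ) :
    totalDeg p {a k, b i j} + 5 ≠ 4 * p ^ n + 2 * p ^ r := by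
  intro hdeg
  have ha := deg_a_add_one (p := p) (by omega) k
  have hb := deg_b_add (p := p) (by omega) i j
  have hexp : ({0, 0, k, i + (j + 1)} : Multiset ℕ) = {n, n, r, j + 1} := by
    refine eq_of_sum_map_pow_eq (b := p)
      (fun e => (Multiset.count_le_card e _).trans_lt hp)
      (fun e => (Multiset.count_le_card e _).trans_lt hp) ?_
    simp only [Multiset.insert_eq_cons, Multiset.map_cons, Multiset.map_singleton,
      Multiset.sum_cons, Multiset.sum_singleton, totalDeg_cons, totalDeg_singleton,
      pow_zero] at hdeg ⊢
    omega
  have : 0 ∈ ({n, n, r, j + 1} : Multiset ℕ) := hexp ▸ Multiset.mem_cons_self 0 _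
  simp only [Multiset.insert_eq_cons, Multiset.mem_cons, Multiset.mem_singleton] at this
  omega

theorem exponents_of_totalDeg_ahh (hp : 5 ≤ p) (hr : 0 < r) (hrn : r < n) {k i j i' j' : ℕ}
    (hi : 1 ≤ i) (hi' : 1 ≤ i')
    (hdeg : totalDeg p {a k, h i j, h i' j'} + 5 = 4 * p ^ n + 2 * p ^ r) :
    j = 0 ∧ j' = 0 ∧ ({k, i, i'} : Multiset ℕ) = {n, n, r} := by
  have ha := deg_a_add_one (p := p) (by omega) k
  have hh := deg_h_add (p := p) (by omega) i j
  have hh' := deg_h_add (p := p) (by omega) i' j'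
  have hexp : ({0, 0, k, i + j, i' + j'} : Multiset ℕ) = {j, j', n, n, r} := by
    refine eq_of_sum_map_pow_eq (b := p)
      (fun e => (count_lt_card_of_mem_of_ne (x := 0) (y := i + j) (by simp) (by simp)
        (by omega) e).trans_le hp)
      (fun e => (count_lt_card_of_mem_of_ne (x := r) (y := n) (by simp) (by simp)
        (by omega) e).trans_le hp) ?_
    simp only [Multiset.insert_eq_cons, Multiset.map_cons, Multiset.map_singleton,
      Multiset.sum_cons, Multiset.sum_singleton, totalDeg_cons, totalDeg_singleton,
      pow_zero] at hdeg ⊢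
    omega
  obtain ⟨rfl, rfl⟩ : j = 0 ∧ j' = 0 := by
    have hcount := congrArg (Multiset.count 0) hexp
    simp only [Multiset.insert_eq_cons, Multiset.count_cons, Multiset.count_singleton] at hcount
    split_ifs at hcount <;> omega
  exact ⟨rfl, rfl, by simpa using hexp⟩

theorem eq_of_admissible_of_totalDeg_ahh (hp : 5 ≤ p) (hr : 0 < r) (hrn : r < n)
    {k i j i' j' : ℕ} (hi : 1 ≤ i) (hi' : 1 ≤ i')
    (hadm : Admissible {a k, h i j, h i' j'})
    (hdeg : totalDeg p {a k, h i j, h i' j'} + 5 = 4 * p ^ n + 2 * p ^ r) :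
    ({a k, h i j, h i' j'} : Multiset MayGen) = {a n, h n 0, h r 0} := by
  obtain ⟨rfl, rfl, hexp⟩ := exponents_of_totalDeg_ahh hp hr hrn hi hi' hdeg
  have hne : i ≠ i' := by
    rintro rfl
    simpa using hadm i 0
  obtain rfl : k = n := by
    have hcount := congrArg (Multiset.count n) hexp
    simp only [Multiset.insert_eq_cons, Multiset.count_cons, Multiset.count_singleton] at hcount
    split_ifs at hcount <;> omega
  have hpair : ({i, i'} : Multiset ℕ) = {k, r} := (Multiset.cons_inj_right k).mp hexp
  simpa using congrArg (Multiset.map (h · 0)) hpair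

theorem admissible_ahh {k i j i' j' : ℕ} (hne : h i j ≠ h i' j') :
    Admissible {a k, h i j, h i' j'} := by
  have hnodup : ({a k, h i j, h i' j'} : Multiset MayGen).Nodup := by simpa using hne
  exact fun u v => Multiset.nodup_iff_count_le_one.mp hnodup (h u v)

theorem totalDeg_ahh_add_five (hp : 0 < p) (n r : ℕ) :
    totalDeg p {a n, h n 0, h r 0} + 5 = 4 * p ^ n + 2 * p ^ r := by
  have ha := deg_a_add_one hp n
  have hn := deg_h_add hp n 0
  have hr := deg_h_add hp r 0
  simp only [Multiset.insert_eq_cons, totalDeg_cons, totalDeg_singleton, pow_zero,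
    add_zero] at hn hr ⊢
  omega

theorem admissible_and_totalDeg_add_five_eq_iff (hp : 5 ≤ p) (hr : 0 < r) (hrn : r < n)
    (S : Multiset MayGen) :
    ((∀ x ∈ S, x.IsValid) ∧ Admissible S ∧ totalFilt S = 3 ∧
        totalDeg p S + 5 = 4 * p ^ n + 2 * p ^ r) ↔
      S = {a n, h n 0, h r 0} := by
  constructor
  · rintro ⟨hvalid, hadm, hfilt, hdeg⟩
    have hodd : Odd (totalDeg p S) := by rw [Nat.odd_iff]; omega
    rcases eq_aaa_or_eq_ahh_or_eq_ab_of_totalFilt_eq_three (by omega) hfilt hodd with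
      ⟨k₁, k₂, k₃, rfl⟩ | ⟨k, i, j, i', j', rfl⟩ | ⟨k, i, j, rfl⟩
    · exact absurd hdeg (totalDeg_aaa_add_five_ne hp k₁ k₂ k₃)
    · exact eq_of_admissible_of_totalDeg_ahh hp hr hrn (hvalid (h i j) (by simp))
        (hvalid (h i' j') (by simp)) hadm hdeg
    · exact absurd hdeg (totalDeg_ab_add_five_ne hp hr (by omega) k i j)
  · rintro rfl
    refine ⟨?_, admissible_ahh (by simpa using hrn.ne'), rfl,
      totalDeg_ahh_add_five (by omega) n r⟩
    simpa [IsValid] using ⟨by omega, hr⟩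

end DegreeEquation

theorem stmt10_general {p m n : ℕ} (hp5 : 5 ≤ p) (hmn : m + 2 ≤ n) (S : Multiset MayGen) :
    ((∀ x ∈ S, x.IsValid) ∧ Admissible S ∧ totalFilt S = 3 ∧
        totalDeg p S =
          2 * (p - 1) * (2 * ∑ j ∈ Finset.Icc (m + 1) (n - 1), p ^ j +
            3 * ∑ j ∈ Finset.range (m + 1), p ^ j) + 1) ↔
      S = {MayGen.a n, MayGen.h n 0, MayGen.h (m + 1) 0} := by
  have hn : ¬IsMin n := by rw [isMin_iff_eq_bot, Nat.bot_eq_zero]; omega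
  have hsum := two_mul_pred_mul_sum_pow_add_six (p := p) (r := m + 1) (n := n) (by omega) (by omega)
  rw [← admissible_and_totalDeg_add_five_eq_iff hp5 m.succ_pos (by omega) S,
    Finset.Icc_sub_one_right_eq_Ico_of_not_isMin hn, ← hsum,
    ← Nat.add_right_cancel_iff (m := totalDeg p S) (n := 5)]

/-- for `n ≥ m+2 > 5`, the unique admissible monomial of total filtration `3`
and total degree `q(2p^{n-1} + ⋯ + 2p^{m+1} + 3p^m + ⋯ + 3p + 3) + 1` is
`{a n, h n 0, h (m+1) 0}`. -/
theorem stmt10 (p : ℕ) (hp : p.Prime) (hp5 : 5 ≤ p) (m n : ℕ)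
    (hmn : m + 2 ≤ n) (hm : 5 < m + 2) (S : Multiset MayGen) :
    ((∀ x ∈ S, x.IsValid) ∧ Admissible S ∧ totalFilt S = 3 ∧
        totalDeg p S =
          2 * (p - 1) * (2 * ∑ j ∈ Finset.Icc (m + 1) (n - 1), p ^ j +
            3 * ∑ j ∈ Finset.range (m + 1), p ^ j) + 1) ↔
      S = {MayGen.a n, MayGen.h n 0, MayGen.h (m + 1) 0} :=
  stmt10_general hp5 hmn S
end
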